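/- Let (ρ,u,∇π) be a smooth solution of the odd-viscosity system (OV) on [0,T]×ℝ², with ∇·u = 0. Then the quantity θ := ∇^⊥·(ρu) − Δρ satisfies the transport equation ∂_t θ + u·∇θ = (1/2) ∇^⊥ρ · ∇|u|² + ℬ(∇u, ∇²ρ), where for any divergence-free vector field v on ℝ² and scalar function α, ℬ(∇v,∇²α) := ∂₁∂₂α (∂₁v₂ + ∂₂v₁) + ∂₁v₁ (∂₁²α − ∂₂²α). -/

import Mathlib

/-!
Common framework: the plane `ℝ²`, classical differential operators, Fourier-side Sobolev
norms, Littlewood–Paley blocks, Chemin–Lerner norms, and the fluid systems of the paper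
"Some remarks on the one-dimensional ... odd viscosity" formalisation.
-/

noncomputable section

open MeasureTheory Filter Set
open scoped ENNReal FourierTransform

/-- The plane `ℝ²`, as a Euclidean space. -/
abbrev V2 : Type := EuclideanSpace ℝ (Fin 2)

/-- Partial derivative in the `i`-th coordinate direction. -/
def pd (i : Fin 2) (f : V2 → ℝ) (x : V2) : ℝ :=
  fderiv ℝ f x (EuclideanSpace.single i 1)

/-- Partial derivative, for complex-valued functions. -/
def pdC (i : Fin 2) (f : V2 → ℂ) (x : V2) : ℂ :=
  fderiv ℝ f x (EuclideanSpace.single i 1)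

/-- Laplacian. -/
def lap (f : V2 → ℝ) (x : V2) : ℝ := pd 0 (pd 0 f) x + pd 1 (pd 1 f) x

/-- Divergence of a planar vector field. -/
def divg (u : V2 → V2) (x : V2) : ℝ :=
  pd 0 (fun y => u y 0) x + pd 1 (fun y => u y 1) x

/-- `j`-th component of the rotated field `u^⊥ = (-u₂, u₁)`. -/
def perpC (u : V2 → V2) (j : Fin 2) : V2 → ℝ :=
  if j = 0 then fun x => -(u x 1) else fun x => u x 0

/-- Vorticity `∇^⊥ ⋅ u = ∂₁ u₂ - ∂₂ u₁`. -/
def curl2 (u : V2 → V2) (x : V2) : ℝ :=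
  pd 0 (fun y => u y 1) x - pd 1 (fun y => u y 0) x

/-- Componentwise Laplacian of a vector field. -/
def lapV (u : V2 → V2) (x : V2) : V2 := WithLp.toLp 2 fun j => lap (fun y => u y j) x

/-- The bilinear operator `ℬ(∇v, ∇²α)`. -/
def Bop (v : V2 → V2) (α : V2 → ℝ) (x : V2) : ℝ :=
  pd 0 (pd 1 α) x * (pd 0 (fun y => v y 1) x + pd 1 (fun y => v y 0) x) +
    pd 0 (fun y => v y 0) x * (pd 0 (pd 0 α) x - pd 1 (pd 1 α) x)

/-- A real function, seen as a complex-valued one. -/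
def fC (f : V2 → ℝ) : V2 → ℂ := fun x => (f x : ℂ)

/-- The Sobolev `H^σ(ℝ²)` norm, defined via the Fourier transform. -/
def hNorm (σ : ℝ) (f : V2 → ℝ) : ℝ :=
  (∫ ξ : V2, (1 + ‖ξ‖ ^ 2) ^ σ * ‖𝓕 (fC f) ξ‖ ^ 2) ^ (1 / 2 : ℝ)

/-- Membership in the Sobolev space `H^σ(ℝ²)`. -/
def MemH (σ : ℝ) (f : V2 → ℝ) : Prop :=
  MemLp f 2 (volume : Measure V2) ∧
    Integrable (fun ξ : V2 => (1 + ‖ξ‖ ^ 2) ^ σ * ‖𝓕 (fC f) ξ‖ ^ 2)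
      (volume : Measure V2)

def hNormV (σ : ℝ) (u : V2 → V2) : ℝ :=
  hNorm σ (fun x => u x 0) + hNorm σ (fun x => u x 1)

def MemHV (σ : ℝ) (u : V2 → V2) : Prop :=
  MemH σ (fun x => u x 0) ∧ MemH σ (fun x => u x 1)

/-- `H^σ` norm of the gradient of a scalar function. -/
def hNormGrad (σ : ℝ) (f : V2 → ℝ) : ℝ := hNorm σ (pd 0 f) + hNorm σ (pd 1 f)

def MemHGrad (σ : ℝ) (f : V2 → ℝ) : Prop := MemH σ (pd 0 f) ∧ MemH σ (pd 1 f)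

/-- `L^p` norm of a scalar function (`p = ∞` allowed). -/
def lpN (p : ℝ≥0∞) (f : V2 → ℝ) : ℝ := (eLpNorm f p (volume : Measure V2)).toReal

def lpNV (p : ℝ≥0∞) (u : V2 → V2) : ℝ := (eLpNorm u p (volume : Measure V2)).toReal

/-- `L^∞` norm of the (full) gradient of a scalar function. -/
def gradSup (f : V2 → ℝ) : ℝ :=
  (eLpNorm (fun x => ‖fderiv ℝ f x‖) ⊤ (volume : Measure V2)).toReal

def gradSupV (u : V2 → V2) : ℝ :=
  (eLpNorm (fun x => ‖fderiv ℝ u x‖) ⊤ (volume : Measure V2)).toReal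

/-- `L^∞` norm of the Hessian of a scalar function. -/
def hessSup (f : V2 → ℝ) : ℝ :=
  (eLpNorm (fun x => ‖fderiv ℝ (fderiv ℝ f) x‖) ⊤ (volume : Measure V2)).toReal

/-- Continuity in time with values in `H^σ`, on the time set `S`. -/
def ContH (σ : ℝ) (S : Set ℝ) (f : ℝ → V2 → ℝ) : Prop :=
  (∀ t ∈ S, MemH σ (f t)) ∧
    ∀ t₀ ∈ S, Tendsto (fun t => hNorm σ (fun x => f t x - f t₀ x))
      (nhdsWithin t₀ S) (nhds 0)

def ContHV (σ : ℝ) (S : Set ℝ) (u : ℝ → V2 → V2) : Prop :=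
  ContH σ S (fun t x => u t x 0) ∧ ContH σ S (fun t x => u t x 1)

def ContHGrad (σ : ℝ) (S : Set ℝ) (π : ℝ → V2 → ℝ) : Prop :=
  ContH σ S (fun t => pd 0 (π t)) ∧ ContH σ S (fun t => pd 1 (π t))

/-- Continuity in time with values in `L²` (scalar case). -/
def ContL2 (S : Set ℝ) (f : ℝ → V2 → ℝ) : Prop :=
  (∀ t ∈ S, MemLp (f t) 2 (volume : Measure V2)) ∧
    ∀ t₀ ∈ S, Tendsto (fun t => eLpNorm (fun x => f t x - f t₀ x) 2 (volume : Measure V2))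
      (nhdsWithin t₀ S) (nhds 0)

/-- Continuity in time with values in `L²` (vector case). -/
def ContL2V (S : Set ℝ) (u : ℝ → V2 → V2) : Prop :=
  (∀ t ∈ S, MemLp (u t) 2 (volume : Measure V2)) ∧
    ∀ t₀ ∈ S, Tendsto (fun t => eLpNorm (fun x => u t x - u t₀ x) 2 (volume : Measure V2))
      (nhdsWithin t₀ S) (nhds 0)

/-- `∇·(ρ u ⊗ u)`, `j`-th component. -/
def momTensorDiv (ρ : V2 → ℝ) (u : V2 → V2) (j : Fin 2) (x : V2) : ℝ :=
  pd 0 (fun y => ρ y * u y 0 * u y j) x + pd 1 (fun y => ρ y * u y 1 * u y j) x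

/-- `∇·(ρ ∇u^⊥)`, `j`-th component. -/
def oddTermDiv (ρ : V2 → ℝ) (u : V2 → V2) (j : Fin 2) (x : V2) : ℝ :=
  pd 0 (fun y => ρ y * pd 0 (perpC u j) y) x + pd 1 (fun y => ρ y * pd 1 (perpC u j) y) x

/-- The odd-viscosity system (OV) on the time set `S`. -/
structure IsOVSolution (S : Set ℝ) (ρ : ℝ → V2 → ℝ) (u : ℝ → V2 → V2)
    (π : ℝ → V2 → ℝ) : Prop where
  mass : ∀ t ∈ S, ∀ x : V2,
    deriv (fun s => ρ s x) t +
      (pd 0 (fun y => ρ t y * u t y 0) x + pd 1 (fun y => ρ t y * u t y 1) x) = 0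
  momentum : ∀ t ∈ S, ∀ x : V2, ∀ j : Fin 2,
    deriv (fun s => ρ s x * u s x j) t + momTensorDiv (ρ t) (u t) j x +
      pd j (π t) x + oddTermDiv (ρ t) (u t) j x = 0
  incomp : ∀ t ∈ S, ∀ x : V2, divg (u t) x = 0

/-- The regularised odd-viscosity system, with hyperviscosity `+ ε Δ² u`. -/
structure IsOVepsSolution (ε : ℝ) (S : Set ℝ) (ρ : ℝ → V2 → ℝ) (u : ℝ → V2 → V2)
    (π : ℝ → V2 → ℝ) : Prop where
  mass : ∀ t ∈ S, ∀ x : V2,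
    deriv (fun s => ρ s x) t +
      (pd 0 (fun y => ρ t y * u t y 0) x + pd 1 (fun y => ρ t y * u t y 1) x) = 0
  momentum : ∀ t ∈ S, ∀ x : V2, ∀ j : Fin 2,
    deriv (fun s => ρ s x * u s x j) t + momTensorDiv (ρ t) (u t) j x +
      pd j (π t) x + oddTermDiv (ρ t) (u t) j x +
      ε * lap (lap fun y => u t y j) x = 0
  incomp : ∀ t ∈ S, ∀ x : V2, divg (u t) x = 0

/-- Space-time smoothness of a scalar function. -/
def SmoothFn (f : ℝ → V2 → ℝ) : Prop := ContDiff ℝ (⊤ : ℕ∞) fun p : ℝ × V2 => f p.1 p.2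

def SmoothFnV (u : ℝ → V2 → V2) : Prop := ContDiff ℝ (⊤ : ℕ∞) fun p : ℝ × V2 => u p.1 p.2

/-- `η = ∇^⊥ ⋅ (ρ u)`. -/
def etaFun (ρ : V2 → ℝ) (u : V2 → V2) (x : V2) : ℝ :=
  curl2 (fun y => WithLp.toLp 2 fun i => ρ y * u y i) x

/-- The good unknown `θ = η - Δρ`. -/
def thetaFun (ρ : V2 → ℝ) (u : V2 → V2) (x : V2) : ℝ := etaFun ρ u x - lap ρ x

/-- The energy `E(t) = ‖ρ(t) - 1‖_{H^{s+1}} + ‖u(t)‖_{H^s}`. -/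
def Een (s : ℝ) (ρ : ℝ → V2 → ℝ) (u : ℝ → V2 → V2) (t : ℝ) : ℝ :=
  hNorm (s + 1) (fun x => ρ t x - 1) + hNormV s (u t)

/-- The energy `F(t)` built on the good unknowns. -/
def Fen (s : ℝ) (ρ : ℝ → V2 → ℝ) (u : ℝ → V2 → V2) (t : ℝ) : ℝ :=
  lpN 2 (fun x => ρ t x - 1) + lpNV 2 (u t) +
    hNorm (s - 1) (thetaFun (ρ t) (u t)) + hNorm (s - 1) (curl2 (u t))

/-- The time interval `[0, T]`, where `T = +∞` is allowed. -/
def timeSet (T : ℝ≥0∞) : Set ℝ := {t : ℝ | 0 ≤ t ∧ ENNReal.ofReal t ≤ T}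

/-- The Bessel-type Fourier multiplier `Λ^σ = (Id - Δ)^{σ/2}`. -/
def Lam (σ : ℝ) (f : V2 → ℂ) : V2 → ℂ :=
  𝓕⁻ fun ξ => (((1 + ‖ξ‖ ^ 2) ^ (σ / 2) : ℝ) : ℂ) * 𝓕 f ξ

/-- Transport term `(v⋅∇)f`. -/
def adv (v : V2 → V2) (f : V2 → ℝ) (x : V2) : ℝ :=
  v x 0 * pd 0 f x + v x 1 * pd 1 f x

/-- Transport term, complex-valued functions. -/
def advC (ζ : V2 → V2) (g : V2 → ℂ) (x : V2) : ℂ :=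
  (ζ x 0 : ℂ) * pdC 0 g x + (ζ x 1 : ℂ) * pdC 1 g x

/-! ### Littlewood–Paley theory and Chemin–Lerner spaces -/

/-- A smooth radial cut-off, equal to `1` for `‖ξ‖ ≤ 1` and to `0` for `‖ξ‖ ≥ 2`. -/
def lpChi (ξ : V2) : ℝ := 1 - Real.smoothTransition (‖ξ‖ - 1)

/-- Littlewood–Paley symbols: index `0` is the low-frequency block `Δ₋₁`,
index `k + 1` is the dyadic block `Δ_k`. -/
def lpSymb (k : ℕ) (ξ : V2) : ℝ :=
  if k = 0 then lpChi ξ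
  else lpChi (((2 : ℝ) ^ (k - 1))⁻¹ • ξ) - lpChi (((2 : ℝ) ^ (k - 1))⁻¹ • ((2 : ℝ) • ξ))

/-- Littlewood–Paley block. -/
def lpBlock (k : ℕ) (f : V2 → ℂ) : V2 → ℂ :=
  𝓕⁻ fun ξ => (lpSymb k ξ : ℂ) * 𝓕 f ξ

/-- `‖Δ_j u‖_{L^q_T(L²)}` (block index `k` corresponds to `j = k - 1`). -/
def blockNormT (k : ℕ) (q : ℝ≥0∞) (T : ℝ) (f : ℝ → V2 → ℂ) : ℝ≥0∞ :=
  eLpNorm (fun t => (eLpNorm (lpBlock k (f t)) 2 (volume : Measure V2)).toReal) q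
    ((volume : Measure ℝ).restrict (Icc 0 T))

/-- Dyadic weight `2^{jσ}` for the block index `k` (recall `j = k - 1`). -/
def lpWeight (σ : ℝ) (k : ℕ) : ℝ≥0∞ :=
  ENNReal.ofReal ((2 : ℝ) ^ (((k : ℝ) - 1) * σ))

/-- The Chemin–Lerner norm `‖·‖_{L̃^q_T(H^σ)}`, complex scalar version. -/
def clNormC (σ : ℝ) (q : ℝ≥0∞) (T : ℝ) (f : ℝ → V2 → ℂ) : ℝ≥0∞ :=
  (∑' k : ℕ, (lpWeight σ k * blockNormT k q T f) ^ 2) ^ (1 / 2 : ℝ)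

def clNorm (σ : ℝ) (q : ℝ≥0∞) (T : ℝ) (f : ℝ → V2 → ℝ) : ℝ≥0∞ :=
  clNormC σ q T fun t x => (f t x : ℂ)

def clNormV (σ : ℝ) (q : ℝ≥0∞) (T : ℝ) (u : ℝ → V2 → V2) : ℝ≥0∞ :=
  clNorm σ q T (fun t x => u t x 0) + clNorm σ q T (fun t x => u t x 1)

def clNormGrad (σ : ℝ) (q : ℝ≥0∞) (T : ℝ) (π : ℝ → V2 → ℝ) : ℝ≥0∞ :=
  clNorm σ q T (fun t => pd 0 (π t)) + clNorm σ q T (fun t => pd 1 (π t))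

/-- Membership in `C̃_T(H^σ) = L̃^∞_T(H^σ) ∩ C([0,T];H^σ)` for a vector field. -/
def MemTildeC (σ : ℝ) (T : ℝ) (u : ℝ → V2 → V2) : Prop :=
  clNormV σ ⊤ T u < ⊤ ∧ ContHV σ (Icc 0 T) u

/-- The Besov `B¹_{2,∞}` norm. -/
def b21inf (f : V2 → ℝ) : ℝ≥0∞ :=
  ⨆ k : ℕ, lpWeight 1 k * eLpNorm (lpBlock k (fC f)) 2 (volume : Measure V2)

/-- `‖∇v‖_{B¹_{2,∞} ∩ L^∞}`, summed over the entries of the Jacobian. -/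
def jacBnorm (v : V2 → V2) : ℝ≥0∞ :=
  (∑ i : Fin 2, ∑ j : Fin 2, b21inf (pd i fun y => v y j)) +
    eLpNorm (fun x => ‖fderiv ℝ v x‖) ⊤ (volume : Measure V2)

/-- `‖∇v‖_{H^σ}`, summed over the entries of the Jacobian (extended-real valued). -/
def jacHnorm (σ : ℝ) (v : V2 → V2) : ℝ≥0∞ :=
  ∑ i : Fin 2, ∑ j : Fin 2, ENNReal.ofReal (hNorm σ (pd i fun y => v y j))

/-- The quantity `V(T) = ∫₀^T V'(t) dt` of transport theory. -/
def Vquant (σ : ℝ) (T : ℝ) (v : ℝ → V2 → V2) : ℝ :=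
  if σ < 2 then (∫⁻ t in Icc 0 T, jacBnorm (v t)).toReal
  else (∫⁻ t in Icc 0 T, jacHnorm (σ - 1) (v t)).toReal

/-- The hypothesis `∇v ∈ L¹([0,T]; B¹_{2,∞} ∩ L^∞)` (if `σ < 2`), resp.
`∇v ∈ L¹([0,T]; H^{σ-1})` (if `σ > 2`). -/
def VCond (σ : ℝ) (T : ℝ) (v : ℝ → V2 → V2) : Prop :=
  (σ < 2 → (∫⁻ t in Icc 0 T, jacBnorm (v t)) < ⊤) ∧
    (2 < σ →
      (∀ t ∈ Icc 0 T, ∀ i j : Fin 2, MemH (σ - 1) (pd i fun y => v t y j)) ∧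
        (∫⁻ t in Icc 0 T, jacHnorm (σ - 1) (v t)) < ⊤)

/-- `‖u‖_{L¹_T(L²)}`. -/
def l1L2V (T : ℝ) (u : ℝ → V2 → V2) : ℝ≥0∞ :=
  ∫⁻ t in Icc 0 T, eLpNorm (u t) 2 (volume : Measure V2)

/-! ### Stokes-type systems -/

/-- The hyperviscous Stokes system with variable-coefficient odd term:
`∂ₜu + (v⋅∇)u + b∇Π + ν b Δ²u + b ∇·(h ∇u^⊥) = g`, with `h = b⁻¹`,
`∇·u = 0`, `u|₀ = u₀`. -/
def IsStokesVarSolution (ν T : ℝ) (b : ℝ → V2 → ℝ) (v : ℝ → V2 → V2)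
    (g : ℝ → V2 → V2) (u₀ : V2 → V2) (u : ℝ → V2 → V2) (P : ℝ → V2 → ℝ) : Prop :=
  (∀ t ∈ Icc 0 T, ∀ x : V2, ∀ j : Fin 2,
    deriv (fun s => u s x j) t + adv (v t) (fun y => u t y j) x +
      b t x * pd j (P t) x + ν * b t x * lap (lap fun y => u t y j) x +
      b t x *
        (pd 0 (fun y => (b t y)⁻¹ * pd 0 (perpC (u t) j) y) x +
          pd 1 (fun y => (b t y)⁻¹ * pd 1 (perpC (u t) j) y) x) = g t x j) ∧
    (∀ t ∈ Icc 0 T, ∀ x : V2, divg (u t) x = 0) ∧ ∀ x : V2, u 0 x = u₀ x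

/-- The hyperviscous Stokes system with constant-coefficient odd term:
`∂ₜu + (v⋅∇)u + b∇Π + ν b Δ²u + Δu^⊥ = f`, `∇·u = 0`, `u|₀ = u₀`. -/
def IsStokesConstSolution (ν T : ℝ) (b : ℝ → V2 → ℝ) (v : ℝ → V2 → V2)
    (f : ℝ → V2 → V2) (u₀ : V2 → V2) (u : ℝ → V2 → V2) (P : ℝ → V2 → ℝ) : Prop :=
  (∀ t ∈ Icc 0 T, ∀ x : V2, ∀ j : Fin 2,
    deriv (fun s => u s x j) t + adv (v t) (fun y => u t y j) x +
      b t x * pd j (P t) x + ν * b t x * lap (lap fun y => u t y j) x +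
      lap (perpC (u t) j) x = f t x j) ∧
    (∀ t ∈ Icc 0 T, ∀ x : V2, divg (u t) x = 0) ∧ ∀ x : V2, u 0 x = u₀ x

/-- The system `h(∂ₜu + (v⋅∇)u) + ∇Π + νΔ²u + ∇·(h∇u^⊥) = h g`, `∇·u = 0`,
`u|₀ = u₀`, on the time set `S`. -/
def IsStokesHSolutionOn (ν : ℝ) (S : Set ℝ) (h : ℝ → V2 → ℝ) (v : ℝ → V2 → V2)
    (g : ℝ → V2 → V2) (u₀ : V2 → V2) (u : ℝ → V2 → V2) (P : ℝ → V2 → ℝ) : Prop :=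
  (∀ t ∈ S, ∀ x : V2, ∀ j : Fin 2,
    h t x * (deriv (fun s => u s x j) t + adv (v t) (fun y => u t y j) x) +
      pd j (P t) x + ν * lap (lap fun y => u t y j) x +
      (pd 0 (fun y => h t y * pd 0 (perpC (u t) j) y) x +
        pd 1 (fun y => h t y * pd 1 (perpC (u t) j) y) x) = h t x * g t x j) ∧
    (∀ t ∈ S, ∀ x : V2, divg (u t) x = 0) ∧ ∀ x : V2, u 0 x = u₀ x

/-!
Take the curl of the momentum equation. The pressure drops out, and incompressibility turns
`∇·(ρ u ⊗ u)` into `(u·∇)(ρu)`, whose curl is `u·∇η - ½ ∇^⊥ρ·∇|u|²`. Since `∇^⊥·u^⊥ = ∇·u = 0`,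
the third-order terms in `u` cancel in the curl of the odd stress, leaving `ℬ(∇u, ∇²ρ) + Δu·∇ρ`.
The term `Δu·∇ρ` also appears in `Δ(u·∇ρ) = u·∇Δρ + 2 ℬ(∇u, ∇²ρ) + Δu·∇ρ`, the Laplacian
of the mass equation, so it disappears in the equation for the difference `θ = η - Δρ`.
-/

theorem fderiv_fderiv_apply_comm {E F : Type*} [NormedAddCommGroup E] [NormedSpace ℝ E]
    [NormedAddCommGroup F] [NormedSpace ℝ F] {f : E → F} (hf : ContDiff ℝ 2 f) (x v w : E) :
    fderiv ℝ (fun y => fderiv ℝ f y v) x w = fderiv ℝ (fun y => fderiv ℝ f y w) x v := by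
  have hdf : DifferentiableAt ℝ (fderiv ℝ f) x :=
    (hf.fderiv_right (m := 1) (by norm_num)).differentiable one_ne_zero x
  have hsymm : IsSymmSndFDerivAt ℝ f x := hf.contDiffAt.isSymmSndFDerivAt (by simp)
  have eval (a b : E) :
      fderiv ℝ (fun y => fderiv ℝ f y a) x b = fderiv ℝ (fderiv ℝ f) x b a := by
    simp [fderiv_clm_apply hdf (differentiableAt_const a)]
  rw [eval, eval, hsymm.eq]

section PartialDerivatives

variable {f g : V2 → ℝ} {m n : WithTop ℕ∞}

theorem contDiff_pd (hf : ContDiff ℝ n f) (hmn : m + 1 ≤ n) (i : Fin 2) :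
    ContDiff ℝ m (pd i f) :=
  (hf.fderiv_right hmn).clm_apply contDiff_const

theorem differentiable_pd (hf : ContDiff ℝ 2 f) (i : Fin 2) : Differentiable ℝ (pd i f) :=
  (contDiff_pd hf (m := 1) (by norm_num) i).differentiable one_ne_zero

theorem contDiff_lap (hf : ContDiff ℝ n f) (hmn : m + 2 ≤ n) : ContDiff ℝ m (lap f) := by
  have hpd (i : Fin 2) : ContDiff ℝ m (pd i (pd i f)) :=
    contDiff_pd (contDiff_pd hf (m := m + 1) (by rwa [add_assoc, one_add_one_eq_two]) i) le_rfl i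
  exact (hpd 0).add (hpd 1)

theorem pd_add (hf : Differentiable ℝ f) (hg : Differentiable ℝ g) (i : Fin 2) :
    pd i (fun y => f y + g y) = fun y => pd i f y + pd i g y := by
  ext x
  simp [pd, fderiv_fun_add (hf x) (hg x)]

theorem pd_neg (f : V2 → ℝ) (i : Fin 2) : pd i (fun y => -f y) = fun y => -pd i f y := by
  ext x
  simp [pd, fderiv_fun_neg]

theorem pd_sub (hf : Differentiable ℝ f) (hg : Differentiable ℝ g) (i : Fin 2) :
    pd i (fun y => f y - g y) = fun y => pd i f y - pd i g y := by
  ext x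
  simp [pd, fderiv_fun_sub (hf x) (hg x)]

theorem pd_mul (hf : Differentiable ℝ f) (hg : Differentiable ℝ g) (i : Fin 2) :
    pd i (fun y => f y * g y) = fun y => f y * pd i g y + g y * pd i f y := by
  ext x
  simp [pd, fderiv_fun_mul (hf x) (hg x)]

theorem pd_comm (hf : ContDiff ℝ 2 f) (i j : Fin 2) : pd i (pd j f) = pd j (pd i f) :=
  funext fun x => fderiv_fderiv_apply_comm hf x _ _

theorem pd_lap (hf : ContDiff ℝ 3 f) (i : Fin 2) : pd i (lap f) = lap (pd i f) := by
  have hf₂ : ContDiff ℝ 2 f := hf.of_le (by norm_num)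
  have hpd (j : Fin 2) : ContDiff ℝ 2 (pd j f) := contDiff_pd hf (by norm_num) j
  calc
    pd i (lap f) = fun y => pd i (pd 0 (pd 0 f)) y + pd i (pd 1 (pd 1 f)) y :=
      pd_add (differentiable_pd (hpd 0) 0) (differentiable_pd (hpd 1) 1) i
    _ = lap (pd i f) := by
      simp only [pd_comm (hpd _) i, pd_comm hf₂ i]
      rfl

theorem lap_neg (f : V2 → ℝ) (x : V2) : lap (fun y => -f y) x = -lap f x := by
  simp only [lap, pd_neg]
  ring

theorem lap_add (hf : ContDiff ℝ 2 f) (hg : ContDiff ℝ 2 g) :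
    lap (fun y => f y + g y) = fun y => lap f y + lap g y := by
  ext x
  simp only [lap, pd_add (hf.differentiable two_ne_zero) (hg.differentiable two_ne_zero),
    pd_add (differentiable_pd hf _) (differentiable_pd hg _)]
  ring

theorem lap_mul (hf : ContDiff ℝ 2 f) (hg : ContDiff ℝ 2 g) (x : V2) :
    lap (fun y => f y * g y) x =
      f x * lap g x + 2 * (pd 0 f x * pd 0 g x + pd 1 f x * pd 1 g x) + g x * lap f x := by
  have hf₁ : Differentiable ℝ f := hf.differentiable two_ne_zero
  have hg₁ : Differentiable ℝ g := hg.differentiable two_ne_zero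
  have hdf := differentiable_pd hf
  have hdg := differentiable_pd hg
  simp only [lap, pd_mul hf₁ hg₁, pd_add (hf₁.fun_mul (hdg _)) (hg₁.fun_mul (hdf _)),
    pd_mul hf₁ (hdg _), pd_mul hg₁ (hdf _)]
  ring

end PartialDerivatives

/-- The weighted Laplacian `∇·(α∇f)`; the `j`-th component of the odd stress `∇·(ρ∇u^⊥)` is
`weightedLap ρ (perpC u j)`. -/
def weightedLap (α f : V2 → ℝ) (x : V2) : ℝ :=
  pd 0 (fun y => α y * pd 0 f y) x + pd 1 (fun y => α y * pd 1 f y) x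

section WeightedLaplacian

variable {α f g : V2 → ℝ}

theorem weightedLap_eq (hα : Differentiable ℝ α) (hf : ContDiff ℝ 2 f) (x : V2) :
    weightedLap α f x = pd 0 α x * pd 0 f x + pd 1 α x * pd 1 f x + α x * lap f x := by
  simp only [weightedLap, lap, pd_mul hα (differentiable_pd hf _)]
  ring

theorem weightedLap_neg (α f : V2 → ℝ) :
    weightedLap α (fun y => -f y) = fun y => -weightedLap α f y := by
  ext x
  simp only [weightedLap, pd_neg, mul_neg]
  ring

theorem weightedLap_add (hα : Differentiable ℝ α) (hf : ContDiff ℝ 2 f) (hg : ContDiff ℝ 2 g)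
    (x : V2) :
    weightedLap α (fun y => f y + g y) x = weightedLap α f x + weightedLap α g x := by
  rw [weightedLap_eq hα (hf.add hg), weightedLap_eq hα hf, weightedLap_eq hα hg,
    lap_add hf hg]
  simp only [pd_add (hf.differentiable two_ne_zero) (hg.differentiable two_ne_zero)]
  ring

theorem contDiff_weightedLap {m n : WithTop ℕ∞} (hα : ContDiff ℝ (m + 1) α)
    (hf : ContDiff ℝ n f) (hmn : m + 2 ≤ n) : ContDiff ℝ m (weightedLap α f) := by
  have hflux (k : Fin 2) : ContDiff ℝ (m + 1) fun y => α y * pd k f y :=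
    hα.mul (contDiff_pd hf (by rwa [add_assoc, one_add_one_eq_two]) k)
  exact (contDiff_pd (hflux 0) le_rfl 0).add (contDiff_pd (hflux 1) le_rfl 1)

theorem pd_weightedLap (hα : ContDiff ℝ 2 α) (hf : ContDiff ℝ 3 f) (i : Fin 2) (x : V2) :
    pd i (weightedLap α f) x = weightedLap (pd i α) f x + weightedLap α (pd i f) x := by
  have hα₁ : Differentiable ℝ α := hα.differentiable two_ne_zero
  have hf₂ : ContDiff ℝ 2 f := hf.of_le (by norm_num)
  have hpd (k : Fin 2) : ContDiff ℝ 2 (pd k f) := contDiff_pd hf (by norm_num) k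
  have hflux (k : Fin 2) : ContDiff ℝ 2 fun y => α y * pd k f y := hα.mul (hpd k)
  have pd_flux (k : Fin 2) : pd i (pd k fun y => α y * pd k f y) x =
      pd k (fun y => pd i α y * pd k f y) x + pd k (fun y => α y * pd k (pd i f) y) x := by
    have hleft : Differentiable ℝ fun y => α y * pd k (pd i f) y :=
      hα₁.fun_mul (differentiable_pd (hpd i) k)
    have hright : Differentiable ℝ fun y => pd k f y * pd i α y :=
      (differentiable_pd hf₂ k).fun_mul (differentiable_pd hα i)
    rw [pd_comm (hflux k), pd_mul hα₁ (differentiable_pd hf₂ k), pd_comm hf₂ i k,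
      pd_add hleft hright]
    simp only [mul_comm (pd k f _)]
    ring
  calc
    pd i (weightedLap α f) x =
        pd i (pd 0 fun y => α y * pd 0 f y) x + pd i (pd 1 fun y => α y * pd 1 f y) x :=
      congrFun (pd_add (differentiable_pd (hflux 0) 0) (differentiable_pd (hflux 1) 1) i) x
    _ = weightedLap (pd i α) f x + weightedLap α (pd i f) x := by
      rw [pd_flux, pd_flux, weightedLap, weightedLap]
      ring

end WeightedLaplacian

section VectorFields

variable {v w : V2 → V2} {α : V2 → ℝ} {x : V2}

theorem contDiff_component {E : Type*} [NormedAddCommGroup E] [NormedSpace ℝ E]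
    {n : WithTop ℕ∞} {w : E → V2} (hw : ContDiff ℝ n w) (j : Fin 2) :
    ContDiff ℝ n fun y => w y j :=
  contDiff_euclidean.1 hw j

theorem contDiff_momentum {E : Type*} [NormedAddCommGroup E] [NormedSpace ℝ E]
    {n : WithTop ℕ∞} {r : E → ℝ} {w : E → V2} (hr : ContDiff ℝ n r) (hw : ContDiff ℝ n w) :
    ContDiff ℝ n fun y => (WithLp.toLp 2 fun j => r y * w y j : V2) :=
  contDiff_euclidean.2 fun j => hr.mul (contDiff_component hw j)

theorem differentiable_component (hv : ContDiff ℝ 1 v) (j : Fin 2) :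
    Differentiable ℝ fun y => v y j :=
  (contDiff_component hv j).differentiable one_ne_zero

theorem divg_smul (hα : Differentiable ℝ α) (hv : ContDiff ℝ 1 v) (x : V2) :
    divg (fun y => α y • v y) x = adv v α x + α x * divg v x := by
  simp only [divg, PiLp.smul_apply, smul_eq_mul, pd_mul hα (differentiable_component hv _), adv]
  ring

theorem contDiff_adv {m n : WithTop ℕ∞} (hv : ContDiff ℝ m v) (hα : ContDiff ℝ n α)
    (hmn : m + 1 ≤ n) : ContDiff ℝ m (adv v α) :=
  ((contDiff_component hv 0).mul (contDiff_pd hα hmn 0)).add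
    ((contDiff_component hv 1).mul (contDiff_pd hα hmn 1))

theorem adv_sub {β : V2 → ℝ} (hα : Differentiable ℝ α) (hβ : Differentiable ℝ β) (v : V2 → V2)
    (x : V2) : adv v (fun y => α y - β y) x = adv v α x - adv v β x := by
  simp only [adv, pd_sub hα hβ]
  ring

theorem pd_adv (hv : ContDiff ℝ 1 v) (hα : ContDiff ℝ 2 α) (i : Fin 2) (x : V2) :
    pd i (adv v α) x = adv v (pd i α) x + ∑ k, pd i (fun y => v y k) x * pd k α x := by
  have hv₁ := differentiable_component hv
  have hdα := differentiable_pd hα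
  change pd i (fun y => v y 0 * pd 0 α y + v y 1 * pd 1 α y) x = _
  simp only [pd_add ((hv₁ 0).fun_mul (hdα 0)) ((hv₁ 1).fun_mul (hdα 1)),
    pd_mul (hv₁ _) (hdα _), adv, Fin.sum_univ_two, pd_comm hα i]
  ring

theorem lap_adv (hv : ContDiff ℝ 2 v) (hα : ContDiff ℝ 3 α) (x : V2) :
    lap (adv v α) x = adv v (lap α) x +
      2 * ∑ i, ∑ k, pd i (fun y => v y k) x * pd i (pd k α) x + adv (lapV v) α x := by
  have hv₂ := contDiff_component hv
  have hpd (k : Fin 2) : ContDiff ℝ 2 (pd k α) := contDiff_pd hα (by norm_num) k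
  change lap (fun y => v y 0 * pd 0 α y + v y 1 * pd 1 α y) x = _
  rw [lap_add ((hv₂ 0).mul (hpd 0)) ((hv₂ 1).mul (hpd 1))]
  simp only [lap_mul (hv₂ _) (hpd _), adv, lapV, pd_lap hα, Fin.sum_univ_two]
  ring

theorem Bop_eq_sum_of_divg_eq_zero (hα : ContDiff ℝ 2 α) (hdiv : divg v x = 0) :
    Bop v α x = ∑ i, ∑ k, pd i (fun y => v y k) x * pd i (pd k α) x := by
  have hdiag : pd 1 (fun y => v y 1) x = -pd 0 (fun y => v y 0) x :=
    eq_neg_of_add_eq_zero_right hdiv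
  simp only [Bop, Fin.sum_univ_two, pd_comm hα 1 0, hdiag]
  ring

theorem curl2_neg (v : V2 → V2) (x : V2) : curl2 (fun y => -v y) x = -curl2 v x := by
  simp only [curl2, PiLp.neg_apply, pd_neg]
  ring

theorem curl2_add (hv : ContDiff ℝ 1 v) (hw : ContDiff ℝ 1 w) (x : V2) :
    curl2 (fun y => v y + w y) x = curl2 v x + curl2 w x := by
  simp only [curl2, PiLp.add_apply,
    pd_add (differentiable_component hv _) (differentiable_component hw _)]
  ring

theorem contDiff_curl2 {m n : WithTop ℕ∞} (hv : ContDiff ℝ n v) (hmn : m + 1 ≤ n) :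
    ContDiff ℝ m (curl2 v) :=
  (contDiff_pd (contDiff_component hv 1) hmn 0).sub (contDiff_pd (contDiff_component hv 0) hmn 1)

theorem curl2_grad (hα : ContDiff ℝ 2 α) (x : V2) :
    curl2 (fun y => WithLp.toLp 2 fun j => pd j α y) x = 0 :=
  sub_eq_zero.2 (congrFun (pd_comm hα 0 1) x)

theorem curl2_adv (hv : ContDiff ℝ 1 v) (hw : ContDiff ℝ 2 w) (x : V2) :
    curl2 (fun y => WithLp.toLp 2 fun j => adv v (fun z => w z j) y) x =
      adv v (curl2 w) x +
        ∑ k, (pd 0 (fun y => v y k) x * pd k (fun y => w y 1) x -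
          pd 1 (fun y => v y k) x * pd k (fun y => w y 0) x) := by
  have hw₂ := contDiff_component hw
  change pd 0 (adv v fun z => w z 1) x - pd 1 (adv v fun z => w z 0) x =
    adv v (fun y => pd 0 (fun z => w z 1) y - pd 1 (fun z => w z 0) y) x + _
  rw [pd_adv hv (hw₂ 1), pd_adv hv (hw₂ 0), Finset.sum_sub_distrib,
    adv_sub (differentiable_pd (hw₂ 1) 0) (differentiable_pd (hw₂ 0) 1)]
  ring

theorem contDiff_oddTermDiv (hα : ContDiff ℝ 2 α) (hv : ContDiff ℝ 3 v) (j : Fin 2) :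
    ContDiff ℝ 1 (oddTermDiv α v j) := by
  have hperp : ContDiff ℝ 3 (perpC v j) := by
    fin_cases j
    · exact (contDiff_component hv 1).neg
    · exact contDiff_component hv 0
  exact contDiff_weightedLap (by simpa only [one_add_one_eq_two] using hα) hperp (by norm_num)

theorem curl2_oddTermDiv (hα : ContDiff ℝ 2 α) (hv : ContDiff ℝ 3 v) (x : V2) :
    curl2 (fun y => WithLp.toLp 2 fun j => oddTermDiv α v j y) x =
      ∑ i, weightedLap (pd i α) (fun y => v y i) x + weightedLap α (divg v) x := by
  have hα₁ : Differentiable ℝ α := hα.differentiable two_ne_zero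
  have hv₃ := contDiff_component hv
  have hpd (i : Fin 2) : ContDiff ℝ 2 (pd i fun y => v y i) :=
    contDiff_pd (hv₃ i) (by norm_num) i
  have hdivg : weightedLap α (divg v) x =
      weightedLap α (pd 0 fun y => v y 0) x + weightedLap α (pd 1 fun y => v y 1) x :=
    weightedLap_add hα₁ (hpd 0) (hpd 1) x
  change pd 0 (weightedLap α fun y => v y 0) x - pd 1 (weightedLap α fun y => -v y 1) x = _
  simp only [weightedLap_neg, pd_neg, pd_weightedLap hα (hv₃ _), hdivg, Fin.sum_univ_two]
  ring

theorem curl2_oddTermDiv_of_divg_eq_zero (hα : ContDiff ℝ 2 α) (hv : ContDiff ℝ 3 v)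
    (hdiv : ∀ y, divg v y = 0) (x : V2) :
    curl2 (fun y => WithLp.toLp 2 fun j => oddTermDiv α v j y) x =
      Bop v α x + adv (lapV v) α x := by
  have hv₂ := contDiff_component (hv.of_le (by norm_num : (2 : WithTop ℕ∞) ≤ 3))
  have hzero : weightedLap α (divg v) x = 0 := by
    simp [funext hdiv, weightedLap, pd]
  rw [curl2_oddTermDiv hα hv, hzero, Bop_eq_sum_of_divg_eq_zero hα (hdiv x)]
  simp only [weightedLap_eq (differentiable_pd hα _) (hv₂ _), Fin.sum_univ_two, adv, lapV]
  ring

theorem pd_sq_add_sq (hv : ContDiff ℝ 1 v) (i : Fin 2) (x : V2) :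
    pd i (fun y => v y 0 ^ 2 + v y 1 ^ 2) x =
      2 * (v x 0 * pd i (fun y => v y 0) x + v x 1 * pd i (fun y => v y 1) x) := by
  have hv₁ := differentiable_component hv
  simp only [sq, pd_add ((hv₁ 0).fun_mul (hv₁ 0)) ((hv₁ 1).fun_mul (hv₁ 1)),
    pd_mul (hv₁ _) (hv₁ _)]
  ring

theorem differentiable_etaFun (hα : ContDiff ℝ 2 α) (hv : ContDiff ℝ 2 v) :
    Differentiable ℝ (etaFun α v) :=
  (contDiff_curl2 (contDiff_momentum hα hv) (m := 1) (by norm_num)).differentiable one_ne_zero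

theorem curl2_adv_momentum_of_divg_eq_zero (hα : ContDiff ℝ 2 α) (hv : ContDiff ℝ 2 v)
    (hdiv : divg v x = 0) :
    curl2 (fun y => WithLp.toLp 2 fun j => adv v (fun z => α z * v z j) y) x =
      adv v (etaFun α v) x -
        1 / 2 * (-(pd 1 α x) * pd 0 (fun y => v y 0 ^ 2 + v y 1 ^ 2) x +
          pd 0 α x * pd 1 (fun y => v y 0 ^ 2 + v y 1 ^ 2) x) := by
  have hα₁ : Differentiable ℝ α := hα.differentiable two_ne_zero
  have hv₁ : ContDiff ℝ 1 v := hv.of_le one_le_two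
  have hdiag : pd 1 (fun y => v y 1) x = -pd 0 (fun y => v y 0) x :=
    eq_neg_of_add_eq_zero_right hdiv
  have hcurl := curl2_adv hv₁ (contDiff_momentum hα hv) x
  simp only [Fin.sum_univ_two, pd_mul hα₁ (differentiable_component hv₁ _), hdiag] at hcurl
  simp only [pd_sq_add_sq hv₁, hdiag]
  refine hcurl.trans ?_
  change adv v (etaFun α v) x + _ = _
  ring

theorem momTensorDiv_of_divg_eq_zero (hα : ContDiff ℝ 1 α) (hv : ContDiff ℝ 1 v)
    (hdiv : divg v x = 0) (j : Fin 2) :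
    momTensorDiv α v j x = adv v (fun y => α y * v y j) x := by
  have hmom : Differentiable ℝ fun y => α y * v y j :=
    (hα.differentiable one_ne_zero).fun_mul (differentiable_component hv j)
  calc
    momTensorDiv α v j x = divg (fun y => (α y * v y j) • v y) x := by
      simp only [momTensorDiv, divg, PiLp.smul_apply, smul_eq_mul, mul_right_comm]
    _ = adv v (fun y => α y * v y j) x := by
      rw [divg_smul hmom hv, hdiv, mul_zero, add_zero]

end VectorFields

section TimeDerivative

variable {f : ℝ → V2 → ℝ} {w : ℝ → V2 → V2}

theorem pd_eq_fderiv_uncurry (hf : Differentiable ℝ (Function.uncurry f)) (i : Fin 2) (t : ℝ)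
    (x : V2) :
    pd i (f t) x = fderiv ℝ (Function.uncurry f) (t, x) (0, EuclideanSpace.single i 1) := by
  have hslice := (hf (t, x)).hasFDerivAt.comp x (hasFDerivAt_prodMk_right (𝕜 := ℝ) t x)
  exact DFunLike.congr_fun hslice.fderiv _

theorem deriv_eq_fderiv_uncurry (hf : Differentiable ℝ (Function.uncurry f)) (t : ℝ) (x : V2) :
    deriv (fun s => f s x) t = fderiv ℝ (Function.uncurry f) (t, x) (1, 0) := by
  have hslice := (hf (t, x)).hasFDerivAt.comp t (hasFDerivAt_prodMk_left (𝕜 := ℝ) t x)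
  exact hslice.hasDerivAt.deriv

theorem contDiff_uncurry_pd {m n : WithTop ℕ∞} (hf : ContDiff ℝ n (Function.uncurry f))
    (hmn : m + 1 ≤ n) (i : Fin 2) : ContDiff ℝ m (Function.uncurry fun s => pd i (f s)) := by
  have hf₁ : Differentiable ℝ (Function.uncurry f) :=
    (hf.of_le (le_add_self.trans hmn)).differentiable one_ne_zero
  have hpd : (Function.uncurry fun s => pd i (f s)) =
      fun p => fderiv ℝ (Function.uncurry f) p (0, EuclideanSpace.single i 1) :=
    funext fun p => pd_eq_fderiv_uncurry hf₁ i p.1 p.2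
  rw [hpd]
  exact (hf.fderiv_right hmn).clm_apply contDiff_const

theorem contDiff_space_slice {F : Type*} [NormedAddCommGroup F] [NormedSpace ℝ F]
    {n : WithTop ℕ∞} {w : ℝ → V2 → F} (hw : ContDiff ℝ n (Function.uncurry w)) (t : ℝ) :
    ContDiff ℝ n (w t) :=
  hw.comp (contDiff_prodMk_right t)

theorem differentiable_time_slice (hf : ContDiff ℝ 1 (Function.uncurry f)) (x : V2) :
    Differentiable ℝ fun s => f s x :=
  (hf.comp₂ contDiff_id contDiff_const).differentiable one_ne_zero

theorem differentiable_time_pd (hf : ContDiff ℝ 2 (Function.uncurry f)) (i : Fin 2) (x : V2) :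
    Differentiable ℝ fun s => pd i (f s) x :=
  differentiable_time_slice (contDiff_uncurry_pd hf (by norm_num) i) x

theorem deriv_pd (hf : ContDiff ℝ 2 (Function.uncurry f)) (i : Fin 2) (t : ℝ) (x : V2) :
    deriv (fun s => pd i (f s) x) t = pd i (fun y => deriv (fun s => f s y) t) x := by
  have hf₁ : Differentiable ℝ (Function.uncurry f) := hf.differentiable two_ne_zero
  have hdf (v : ℝ × V2) :
      Differentiable ℝ (Function.uncurry fun s y => fderiv ℝ (Function.uncurry f) (s, y) v) :=
    ((hf.fderiv_right (m := 1) (by norm_num)).clm_apply contDiff_const).differentiable one_ne_zero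
  simp only [pd_eq_fderiv_uncurry hf₁, deriv_eq_fderiv_uncurry hf₁]
  rw [deriv_eq_fderiv_uncurry (hdf _), pd_eq_fderiv_uncurry (hdf _)]
  exact fderiv_fderiv_apply_comm hf (t, x) _ _

theorem differentiable_time_lap (hf : ContDiff ℝ 3 (Function.uncurry f)) (x : V2) :
    Differentiable ℝ fun s => lap (f s) x := by
  have hpd (i : Fin 2) : ContDiff ℝ 2 (Function.uncurry fun s => pd i (f s)) :=
    contDiff_uncurry_pd hf (by norm_num) i
  exact (differentiable_time_pd (hpd 0) 0 x).add (differentiable_time_pd (hpd 1) 1 x)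

theorem deriv_lap (hf : ContDiff ℝ 3 (Function.uncurry f)) (t : ℝ) (x : V2) :
    deriv (fun s => lap (f s) x) t = lap (fun y => deriv (fun s => f s y) t) x := by
  have hpd (i : Fin 2) : ContDiff ℝ 2 (Function.uncurry fun s => pd i (f s)) :=
    contDiff_uncurry_pd hf (by norm_num) i
  simp only [lap]
  rw [deriv_fun_add (differentiable_time_pd (hpd 0) 0 x t) (differentiable_time_pd (hpd 1) 1 x t),
    deriv_pd (hpd 0), deriv_pd (hpd 1)]
  simp only [deriv_pd (hf.of_le (by norm_num : (2 : WithTop ℕ∞) ≤ 3))]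

theorem contDiff_uncurry_momentum {n : WithTop ℕ∞} (hf : ContDiff ℝ n (Function.uncurry f))
    (hw : ContDiff ℝ n (Function.uncurry w)) :
    ContDiff ℝ n (Function.uncurry fun s y => (WithLp.toLp 2 fun j => f s y * w s y j : V2)) :=
  contDiff_momentum hf hw

theorem contDiff_uncurry_component {n : WithTop ℕ∞} (hw : ContDiff ℝ n (Function.uncurry w))
    (j : Fin 2) : ContDiff ℝ n (Function.uncurry fun s y => w s y j) :=
  contDiff_component hw j

theorem differentiable_time_curl2 (hw : ContDiff ℝ 2 (Function.uncurry w)) (x : V2) :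
    Differentiable ℝ fun s => curl2 (w s) x :=
  (differentiable_time_pd (contDiff_uncurry_component hw 1) 0 x).sub
    (differentiable_time_pd (contDiff_uncurry_component hw 0) 1 x)

theorem deriv_curl2 (hw : ContDiff ℝ 2 (Function.uncurry w)) (t : ℝ) (x : V2) :
    deriv (fun s => curl2 (w s) x) t =
      curl2 (fun y => WithLp.toLp 2 fun j => deriv (fun s => w s y j) t) x := by
  have hwc := contDiff_uncurry_component hw
  simp only [curl2]
  rw [deriv_fun_sub (differentiable_time_pd (hwc 1) 0 x t) (differentiable_time_pd (hwc 0) 1 x t),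
    deriv_pd (hwc 1), deriv_pd (hwc 0)]

end TimeDerivative

namespace IsOVSolution

variable {S : Set ℝ} {ρ : ℝ → V2 → ℝ} {u : ℝ → V2 → V2} {π : ℝ → V2 → ℝ} {t : ℝ}

theorem deriv_density (hsol : IsOVSolution S ρ u π) (ht : t ∈ S)
    (hρ : ContDiff ℝ 1 (ρ t)) (hu : ContDiff ℝ 1 (u t)) (x : V2) :
    deriv (fun s => ρ s x) t = -adv (u t) (ρ t) x := by
  have hmass : deriv (fun s => ρ s x) t + divg (fun y => ρ t y • u t y) x = 0 :=
    hsol.mass t ht x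
  rw [divg_smul (hρ.differentiable one_ne_zero) hu, hsol.incomp t ht x] at hmass
  linarith

theorem deriv_momentum (hsol : IsOVSolution S ρ u π) (ht : t ∈ S)
    (hρ : ContDiff ℝ 1 (ρ t)) (hu : ContDiff ℝ 1 (u t)) (x : V2) (j : Fin 2) :
    deriv (fun s => ρ s x * u s x j) t =
      -(adv (u t) (fun y => ρ t y * u t y j) x + pd j (π t) x + oddTermDiv (ρ t) (u t) j x) := by
  have hmom := hsol.momentum t ht x j
  rw [momTensorDiv_of_divg_eq_zero hρ hu (hsol.incomp t ht x)] at hmom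
  linarith

theorem deriv_lap_density (hsol : IsOVSolution S ρ u π) (ht : t ∈ S)
    (hρ : ContDiff ℝ 3 (Function.uncurry ρ)) (hu : ContDiff ℝ 2 (u t)) (x : V2) :
    deriv (fun s => lap (ρ s) x) t =
      -(adv (u t) (lap (ρ t)) x + 2 * Bop (u t) (ρ t) x + adv (lapV (u t)) (ρ t) x) := by
  have hρt : ContDiff ℝ 3 (ρ t) := contDiff_space_slice hρ t
  rw [deriv_lap hρ, funext (hsol.deriv_density ht (hρt.of_le (by norm_num))
    (hu.of_le one_le_two)), lap_neg, lap_adv hu hρt,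
    Bop_eq_sum_of_divg_eq_zero (hρt.of_le (by norm_num)) (hsol.incomp t ht x)]

theorem curl2_deriv_momentum (hsol : IsOVSolution S ρ u π) (ht : t ∈ S)
    (hρ : ContDiff ℝ 2 (ρ t)) (hu : ContDiff ℝ 3 (u t)) (hπ : ContDiff ℝ 2 (π t)) (x : V2) :
    curl2 (fun y => WithLp.toLp 2 fun j => deriv (fun s => ρ s y * u s y j) t) x =
      -(curl2 (fun y => WithLp.toLp 2 fun j => adv (u t) (fun z => ρ t z * u t z j) y) x +
        curl2 (fun y => WithLp.toLp 2 fun j => oddTermDiv (ρ t) (u t) j y) x) := by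
  have hu₂ : ContDiff ℝ 2 (u t) := hu.of_le (by norm_num)
  have hu₁ : ContDiff ℝ 1 (u t) := hu₂.of_le one_le_two
  have hadv : ContDiff ℝ 1 fun y =>
      (WithLp.toLp 2 fun j => adv (u t) (fun z => ρ t z * u t z j) y : V2) :=
    contDiff_euclidean.2 fun j =>
      contDiff_adv hu₁ (hρ.mul (contDiff_component hu₂ j)) (by norm_num)
  have hgrad : ContDiff ℝ 1 fun y => (WithLp.toLp 2 fun j => pd j (π t) y : V2) :=
    contDiff_euclidean.2 fun j => contDiff_pd hπ (by norm_num) j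
  have hodd : ContDiff ℝ 1 fun y =>
      (WithLp.toLp 2 fun j => oddTermDiv (ρ t) (u t) j y : V2) :=
    contDiff_euclidean.2 fun j => contDiff_oddTermDiv hρ hu j
  have hfield : (fun y => WithLp.toLp 2 fun j => deriv (fun s => ρ s y * u s y j) t) =
      fun y => -((WithLp.toLp 2 fun j => adv (u t) (fun z => ρ t z * u t z j) y : V2) +
        (WithLp.toLp 2 fun j => pd j (π t) y) +
        WithLp.toLp 2 fun j => oddTermDiv (ρ t) (u t) j y) := by
    ext y j
    exact hsol.deriv_momentum ht (hρ.of_le one_le_two) hu₁ y j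
  rw [hfield, curl2_neg, curl2_add (hadv.add hgrad) hodd, curl2_add hadv hgrad, curl2_grad hπ,
    add_zero]

theorem deriv_etaFun (hsol : IsOVSolution S ρ u π) (ht : t ∈ S)
    (hρ : ContDiff ℝ 2 (Function.uncurry ρ)) (hu : ContDiff ℝ 3 (Function.uncurry u))
    (hπ : ContDiff ℝ 2 (π t)) (x : V2) :
    deriv (fun s => etaFun (ρ s) (u s) x) t =
      -adv (u t) (etaFun (ρ t) (u t)) x +
        1 / 2 * (-(pd 1 (ρ t) x) * pd 0 (fun y => u t y 0 ^ 2 + u t y 1 ^ 2) x +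
          pd 0 (ρ t) x * pd 1 (fun y => u t y 0 ^ 2 + u t y 1 ^ 2) x) -
        (Bop (u t) (ρ t) x + adv (lapV (u t)) (ρ t) x) := by
  have hρt : ContDiff ℝ 2 (ρ t) := contDiff_space_slice hρ t
  have hut : ContDiff ℝ 3 (u t) := contDiff_space_slice hu t
  have hdiv := hsol.incomp t ht
  simp only [etaFun]
  rw [deriv_curl2 (contDiff_uncurry_momentum hρ (hu.of_le (by norm_num))),
    hsol.curl2_deriv_momentum ht hρt hut hπ,
    curl2_adv_momentum_of_divg_eq_zero hρt (hut.of_le (by norm_num)) (hdiv x),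
    curl2_oddTermDiv_of_divg_eq_zero hρt hut hdiv]
  ring

end IsOVSolution

theorem theta_transport_equation_general {S : Set ℝ} {ρ : ℝ → V2 → ℝ} {u : ℝ → V2 → V2}
    {π : ℝ → V2 → ℝ} (hρ : ContDiff ℝ 3 (Function.uncurry ρ))
    (hu : ContDiff ℝ 3 (Function.uncurry u)) (hπ : ∀ t ∈ S, ContDiff ℝ 2 (π t))
    (hsol : IsOVSolution S ρ u π) {t : ℝ} (ht : t ∈ S) (x : V2) :
    deriv (fun s => thetaFun (ρ s) (u s) x) t + adv (u t) (thetaFun (ρ t) (u t)) x =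
      1 / 2 * (-(pd 1 (ρ t) x) * pd 0 (fun y => u t y 0 ^ 2 + u t y 1 ^ 2) x +
        pd 0 (ρ t) x * pd 1 (fun y => u t y 0 ^ 2 + u t y 1 ^ 2) x) +
      Bop (u t) (ρ t) x := by
  have hρ₂ : ContDiff ℝ 2 (Function.uncurry ρ) := hρ.of_le (by norm_num)
  have hρt : ContDiff ℝ 3 (ρ t) := contDiff_space_slice hρ t
  have hut : ContDiff ℝ 3 (u t) := contDiff_space_slice hu t
  have hmom := contDiff_uncurry_momentum hρ₂ (hu.of_le (by norm_num))
  have hderiv : deriv (fun s => thetaFun (ρ s) (u s) x) t =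
      deriv (fun s => etaFun (ρ s) (u s) x) t - deriv (fun s => lap (ρ s) x) t :=
    deriv_fun_sub (differentiable_time_curl2 hmom x t) (differentiable_time_lap hρ x t)
  have hadv : adv (u t) (thetaFun (ρ t) (u t)) x =
      adv (u t) (etaFun (ρ t) (u t)) x - adv (u t) (lap (ρ t)) x :=
    adv_sub (differentiable_etaFun (hρt.of_le (by norm_num)) (hut.of_le (by norm_num)))
      ((contDiff_lap hρt (m := 1) (by norm_num)).differentiable one_ne_zero) _ x
  rw [hderiv, hadv, hsol.deriv_etaFun ht hρ₂ hu (hπ t ht),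
    hsol.deriv_lap_density ht hρ (hut.of_le (by norm_num))]
  ring

/-- The good unknown `θ = ∇^⊥·(ρu) - Δρ` solves the transport equation
`∂ₜθ + u·∇θ = ½ ∇^⊥ρ·∇|u|² + ℬ(∇u, ∇²ρ)`. -/
theorem theta_transport_equation
    (T : ℝ) (hT : 0 < T) (ρ : ℝ → V2 → ℝ) (u : ℝ → V2 → V2) (π : ℝ → V2 → ℝ)
    (hsmρ : SmoothFn ρ) (hsmu : SmoothFnV u) (hsmπ : SmoothFn π)
    (hsol : IsOVSolution (Icc 0 T) ρ u π) :
    ∀ t ∈ Icc 0 T, ∀ x : V2,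
      deriv (fun s => thetaFun (ρ s) (u s) x) t +
          (u t x 0 * pd 0 (thetaFun (ρ t) (u t)) x +
            u t x 1 * pd 1 (thetaFun (ρ t) (u t)) x) =
        (1 / 2) *
            (-(pd 1 (ρ t) x) * pd 0 (fun y => u t y 0 ^ 2 + u t y 1 ^ 2) x +
              pd 0 (ρ t) x * pd 1 (fun y => u t y 0 ^ 2 + u t y 1 ^ 2) x) +
          Bop (u t) (ρ t) x := by
  exact fun t ht x => theta_transport_equation_general (contDiff_infty.1 hsmρ 3)
    (contDiff_infty.1 hsmu 3) (fun s _ => contDiff_space_slice (contDiff_infty.1 hsmπ 2) s)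
    hsol ht x
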